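/- arXiv:1610.03528 — 2 statements merged into one kernel-verified Lean document; each statement's English description precedes it below -/
import Mathlib

section
/- The affine rational points on the elliptic curve defined by v² = u³ + 1 are exactly (0, 1), (0, −1), (2, 3), (2, −3), and (−1, 0). That is, for u, v ∈ ℚ, v² = u³ + 1 holds if and only if (u, v) is one of these five pairs. -/
/-! The curve is `v ^ 2 = X * (X ^ 2 - 3 * X + 3)` with `X = u + 1`. Writing `X = c / e ^ 2` in
lowest terms, the two factors of `c * (c ^ 2 - 3 * c * e ^ 2 + 3 * e ^ 4)` are coprime up to the
prime `3`. Hence if `X ≠ 0`, then `X` or `3 / X`, its translate by the `2`-torsion point `(0, 0)`,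
is a square `r ^ 2 / s ^ 2` with `w ^ 2 = r ^ 4 - 3 * r ^ 2 * s ^ 2 + 3 * s ^ 4`. Such a point is
halved by passing through the `2`-isogenous curve `Y ^ 2 = X * (X ^ 2 + 6 * X - 3)`: for each of the
two isogenies, a difference of squares factors three times a fourth power into coprime parts.
Halving never increases `s` and fixes it only if `s = 1`, so it leads down to `r = s = 1`, which is
the half of no other point. -/

theorem pos_and_pos_of_mul_pos_of_add_pos {R : Type*} [Ring R] [LinearOrder R]
    [IsStrictOrderedRing R] {a b : R} (hmul : 0 < a * b) (hadd : 0 < a + b) : 0 < a ∧ 0 < b :=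
  (pos_and_pos_or_neg_and_neg_of_mul_pos hmul).resolve_right
    fun ⟨ha, hb⟩ ↦ (add_neg ha hb).not_gt hadd

theorem sq_sub_three_mul_add_three_mul_sq_pos {R : Type*} [CommRing R] [LinearOrder R]
    [IsStrictOrderedRing R] (x : R) {y : R} (hy : y ≠ 0) : 0 < x ^ 2 - 3 * x * y + 3 * y ^ 2 := by
  have hy2 : 0 < y ^ 2 := by positivity
  linarith [sq_nonneg (2 * x - 3 * y)]

theorem isCoprime_of_mul_eq_squarefree_mul {R : Type*} [CommRing R] [IsDomain R]
    [IsPrincipalIdealRing R] {a b c k : R} (hc : Squarefree c) (h : a * b = c * k)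
    (hk : IsCoprime (a + b) k) : IsCoprime a b := by
  refine IsRelPrime.isCoprime fun d hda hdb ↦ hk.isRelPrime (dvd_add hda hdb) ?_
  exact hc.dvd_of_squarefree_of_mul_dvd_mul_right (h ▸ mul_dvd_mul hda hdb)

theorem exists_pos_eq_pow_of_mul_eq_pow {a b k : ℤ} {n : ℕ} (hn : n ≠ 0) (ha : 0 < a)
    (hab : IsCoprime a b) (h : a * b = k ^ n) : ∃ x, 0 < x ∧ a = x ^ n := by
  obtain ⟨d, hd⟩ := exists_associated_pow_of_mul_eq_pow' hab h
  have had : a = |d| ^ n := by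
    rw [← abs_pow, abs_eq_abs.2 (Int.associated_iff.1 hd), abs_of_pos ha]
  refine ⟨|d|, abs_pos.2 ?_, had⟩
  rintro rfl
  rw [abs_zero, zero_pow hn] at had
  exact ha.ne' had

theorem exists_pos_eq_pow_and_eq_pow_of_mul_eq_pow {a b k : ℤ} {n : ℕ} (hn : n ≠ 0) (ha : 0 < a)
    (hb : 0 < b) (hab : IsCoprime a b) (h : a * b = k ^ n) :
    ∃ x y, 0 < x ∧ 0 < y ∧ a = x ^ n ∧ b = y ^ n := by
  obtain ⟨x, hx, hax⟩ := exists_pos_eq_pow_of_mul_eq_pow hn ha hab h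
  obtain ⟨y, hy, hby⟩ := exists_pos_eq_pow_of_mul_eq_pow hn hb hab.symm ((mul_comm _ _).trans h)
  exact ⟨x, y, hx, hy, hax, hby⟩

theorem exists_eq_prime_mul_pow_of_mul_eq {p a b k : ℤ} {n : ℕ} (hp : Prime p) (hp0 : 0 < p)
    (hn : n ≠ 0) (hk : 0 < k) (hab : 0 < a + b) (hcop : IsCoprime (a + b) k)
    (h : a * b = p * k ^ n) :
    ∃ x y, 0 < x ∧ 0 < y ∧ IsCoprime (p * x) y ∧ k = x * y ∧
      (a = p * x ^ n ∧ b = y ^ n ∨ a = y ^ n ∧ b = p * x ^ n) := by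
  wlog hpa : p ∣ a generalizing a b
  · have hpb : p ∣ b := (hp.dvd_or_dvd ⟨_, h⟩).resolve_left hpa
    obtain ⟨x, y, hx, hy, hxy, hkxy, hsplit⟩ :=
      this (add_comm a b ▸ hab) (add_comm a b ▸ hcop) (mul_comm a b ▸ h) hpb
    exact ⟨x, y, hx, hy, hxy, hkxy, hsplit.symm.imp And.symm And.symm⟩
  have hab_cop : IsCoprime a b :=
    isCoprime_of_mul_eq_squarefree_mul hp.squarefree h hcop.pow_right
  obtain ⟨ha, hb⟩ := pos_and_pos_of_mul_pos_of_add_pos (h ▸ by positivity) hab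
  obtain ⟨a, rfl⟩ := hpa
  have ha' : 0 < a := pos_of_mul_pos_right ha hp0.le
  have hmul : a * b = k ^ n := mul_left_cancel₀ hp.ne_zero (by rw [← mul_assoc, h])
  have hcop' : IsCoprime a b := hab_cop.of_mul_left_right
  obtain ⟨x, y, hx, hy, rfl, rfl⟩ :=
    exists_pos_eq_pow_and_eq_pow_of_mul_eq_pow hn ha' hb hcop' hmul
  refine ⟨x, y, hx, hy, ?_, ?_, .inl ⟨rfl, rfl⟩⟩
  · have hn0 := Nat.pos_of_ne_zero hn
    exact ((IsCoprime.pow_right_iff hn0).1 hab_cop.of_mul_left_left).mul_left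
      ((IsCoprime.pow_iff hn0 hn0).1 hcop')
  · rw [← mul_pow] at hmul
    exact ((pow_left_inj₀ (by positivity) hk.le hn).1 hmul).symm

theorem natCast_dvd_of_dvd_sq_add_sq {p : ℕ} [Fact p.Prime] (hp : p % 4 = 3) {a b : ℤ}
    (h : (p : ℤ) ∣ a ^ 2 + b ^ 2) : (p : ℤ) ∣ b := by
  rw [← ZMod.intCast_zmod_eq_zero_iff_dvd] at h ⊢
  by_contra hb
  push_cast at h
  exact ZMod.mod_four_ne_three_of_sq_eq_neg_sq' hb (eq_neg_of_add_eq_zero_left h) hp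

/-- A primitive positive integral point on the `2`-covering
`w ^ 2 = r ^ 4 - 3 * r ^ 2 * s ^ 2 + 3 * s ^ 4` of `Y ^ 2 = X * (X ^ 2 - 3 * X + 3)`; it lies over
`X = r ^ 2 / s ^ 2`. -/
structure CoverPoint (r s w : ℤ) : Prop where
  r_pos : 0 < r
  s_pos : 0 < s
  w_pos : 0 < w
  isCoprime : IsCoprime r s
  eq : w ^ 2 = r ^ 4 - 3 * r ^ 2 * s ^ 2 + 3 * s ^ 4

/-- A primitive positive integral point on the `2`-covering
`z ^ 2 = y ^ 4 + 6 * x ^ 2 * y ^ 2 - 3 * x ^ 4` of the `2`-isogenous curve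
`Y ^ 2 = X * (X ^ 2 + 6 * X - 3)`; it lies over `X = y ^ 2 / x ^ 2`. -/
structure DualCoverPoint (x y z : ℤ) : Prop where
  x_pos : 0 < x
  y_pos : 0 < y
  z_pos : 0 < z
  isCoprime : IsCoprime x y
  eq : z ^ 2 = y ^ 4 + 6 * x ^ 2 * y ^ 2 - 3 * x ^ 4

theorem DualCoverPoint.exists_coverPoint {x y z : ℤ} (h : DualCoverPoint x y z) :
    ∃ p q, x = p * q ∧ CoverPoint q p y := by
  have hfactor : (y ^ 2 + 3 * x ^ 2 + z) * (y ^ 2 + 3 * x ^ 2 - z) = 2 * (2 * (3 * x ^ 4)) := by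
    linear_combination -h.eq
  obtain ⟨a, ha⟩ : Even (y ^ 2 + 3 * x ^ 2 + z) := by
    rcases Int.even_mul.1 (hfactor ▸ even_two_mul _) with heven | heven
    · exact heven
    · rwa [Int.even_add, ← Int.even_sub]
  have hmul : a * (a - z) = 3 * x ^ 4 := by
    obtain rfl : z = 2 * a - y ^ 2 - 3 * x ^ 2 := by linarith
    linarith
  have hsum : a + (a - z) = y ^ 2 + x * (3 * x) := by linarith
  have hx := h.x_pos
  obtain ⟨p, q, hp, hq, hpq, rfl, hsplit⟩ :=
    exists_eq_prime_mul_pow_of_mul_eq Int.prime_three (by norm_num) (by norm_num) hx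
      (by rw [hsum]; positivity)
      (by rw [hsum]; exact h.isCoprime.symm.pow_left.add_mul_left_left _) hmul
  refine ⟨p, q, rfl, hq, hp, h.y_pos, hpq.of_mul_left_right.symm, ?_⟩
  have hsum' : a + (a - z) = 3 * p ^ 4 + q ^ 4 := by
    rcases hsplit with ⟨ha, hb⟩ | ⟨ha, hb⟩ <;> linarith
  linear_combination hsum' - hsum

theorem exists_dualCoverPoint_of_mul_eq {a b m z : ℤ} (hm : 0 < m) (hz : 0 < z)
    (hsum : 0 < a + b) (hcop : IsCoprime (a + b) m) (hmul : a * b = 3 * m ^ 4)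
    (hdiff : b - a = z ^ 2 - 6 * m ^ 2) : ∃ x y, m = x * y ∧ DualCoverPoint x y z := by
  obtain ⟨x, y, hx, hy, hxy, rfl, ⟨rfl, rfl⟩ | ⟨rfl, rfl⟩⟩ :=
    exists_eq_prime_mul_pow_of_mul_eq Int.prime_three (by norm_num) (by norm_num) hm hsum hcop hmul
  · exact ⟨x, y, rfl, hx, hy, hz, hxy.of_mul_left_right, by linear_combination -hdiff⟩
  · have hdvd : (3 : ℤ) ∣ z ^ 2 + (y ^ 2) ^ 2 :=
      ⟨x ^ 4 + 2 * (x * y) ^ 2, by linear_combination -hdiff⟩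
    have h3y : (3 : ℤ) ∣ y :=
      Int.prime_three.dvd_of_dvd_pow (natCast_dvd_of_dvd_sq_add_sq (p := 3) (by norm_num) hdvd)
    exact absurd h3y (Int.prime_three.coprime_iff_not_dvd.1 hxy.of_mul_left_left)

namespace CoverPoint

variable {r s w : ℤ}

theorem isCoprime_w_s (h : CoverPoint r s w) : IsCoprime w s := by
  have hw : w ^ 2 = r ^ 4 + s * (3 * s ^ 3 - 3 * r ^ 2 * s) := by linear_combination h.eq
  refine (IsCoprime.pow_left_iff two_pos).1 ?_
  rw [hw]
  exact h.isCoprime.pow_left.add_mul_left_left _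

theorem exists_dual_of_odd (h : CoverPoint r s w) (hs : Odd s) :
    ∃ x y, s = x * y ∧ DualCoverPoint x y (2 * r) := by
  have hw := h.w_pos
  have hsum : (2 * w - 2 * r ^ 2 + 3 * s ^ 2) + (2 * w + 2 * r ^ 2 - 3 * s ^ 2) = 2 ^ 2 * w := by
    ring
  refine exists_dualCoverPoint_of_mul_eq (a := 2 * w - 2 * r ^ 2 + 3 * s ^ 2)
    (b := 2 * w + 2 * r ^ 2 - 3 * s ^ 2) h.s_pos (mul_pos two_pos h.r_pos) ?_ ?_ ?_ (by ring)
  · rw [hsum]; positivity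
  · rw [hsum]
    exact (Int.isCoprime_two_left.2 hs).pow_left.mul_left h.isCoprime_w_s
  · linear_combination 4 * h.eq

theorem exists_dual_of_even (h : CoverPoint r s w) (hs : Even s) :
    ∃ x y, s = 2 * (x * y) ∧ DualCoverPoint x y r := by
  obtain ⟨m, rfl⟩ := even_iff_exists_two_mul.1 hs
  have hr : Odd r := Int.isCoprime_two_right.1 h.isCoprime.of_mul_right_left
  have hw : Odd w := Int.isCoprime_two_right.1 h.isCoprime_w_s.of_mul_right_left
  obtain ⟨c, hc⟩ := hw.add_odd (hr.pow (n := 2))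
  have hmul : (w - c + 3 * m ^ 2) * (c - 3 * m ^ 2) = 3 * m ^ 4 := by
    obtain rfl : w = 2 * c - r ^ 2 := by linarith
    linarith [h.eq]
  have hsum : (w - c + 3 * m ^ 2) + (c - 3 * m ^ 2) = w := by ring
  have hm : 0 < m := pos_of_mul_pos_right h.s_pos two_pos.le
  obtain ⟨x, y, rfl, hxy⟩ := exists_dualCoverPoint_of_mul_eq hm h.r_pos
    (by rw [hsum]; exact h.w_pos) (by rw [hsum]; exact h.isCoprime_w_s.of_mul_right_right)
    hmul (by linarith)
  exact ⟨x, y, rfl, hxy⟩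

theorem exists_dual (h : CoverPoint r s w) :
    ∃ t x y z, 0 < t ∧ s = t * (x * y) ∧ 2 * r = t * z ∧ DualCoverPoint x y z := by
  rcases Int.even_or_odd s with hs | hs
  · obtain ⟨x, y, hsxy, hdual⟩ := h.exists_dual_of_even hs
    exact ⟨2, x, y, r, two_pos, hsxy, rfl, hdual⟩
  · obtain ⟨x, y, hsxy, hdual⟩ := h.exists_dual_of_odd hs
    exact ⟨1, x, y, 2 * r, one_pos, by rw [one_mul, hsxy], (one_mul _).symm, hdual⟩

theorem s_eq_one_of_r_eq_one_of_w_eq_one (h : CoverPoint 1 s 1) : s = 1 := by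
  have hs := h.s_pos
  have hzero : s ^ 2 * (s ^ 2 - 1) = 0 := by linarith [h.eq]
  have hsq : s ^ 2 = 1 :=
    sub_eq_zero.1 ((mul_eq_zero.1 hzero).resolve_left (by positivity))
  exact (pow_eq_one_iff_of_nonneg hs.le two_ne_zero).1 hsq

theorem eq_one {r s w : ℤ} (h : CoverPoint r s w) : r = 1 ∧ s = 1 := by
  obtain ⟨t, x, y, z, ht, hs, hrz, hdual⟩ := h.exists_dual
  obtain ⟨p, q, hx, hhalf⟩ := hdual.exists_coverPoint
  have hp := hhalf.s_pos
  have hq := hhalf.r_pos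
  have hy := hhalf.w_pos
  have hpq : q = 1 ∧ p = 1 := by
    by_cases hlt : p < s
    · exact eq_one hhalf
    · have hprod : q * y ≤ 1 := by
        refine le_of_mul_le_mul_left ?_ hp
        calc p * (q * y) ≤ t * (p * (q * y)) := le_mul_of_one_le_left (by positivity) ht
          _ = s := by rw [hs, hx, mul_assoc]
          _ ≤ p * 1 := by linarith
      obtain rfl : q = 1 := by nlinarith
      obtain rfl : y = 1 := by linarith
      exact ⟨rfl, hhalf.s_eq_one_of_r_eq_one_of_w_eq_one⟩
  subst hx hs
  obtain ⟨rfl, rfl⟩ := hpq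
  obtain rfl : y = 1 := by nlinarith [hhalf.eq]
  obtain rfl : z = 2 := by nlinarith [hdual.eq, hdual.z_pos]
  obtain rfl : r = t := by linarith
  have hunit : IsUnit r := isCoprime_self.1 (by simpa using h.isCoprime)
  obtain rfl : r = 1 := by
    rcases Int.isUnit_iff.1 hunit with h1 | h1 <;> omega
  simp
termination_by s.toNat
decreasing_by exact (Int.toNat_lt_toNat h.s_pos).2 hlt

end CoverPoint

section Cubic

variable {c e b : ℤ}

theorem exists_coverPoint_of_not_three_dvd (hc : 0 < c) (he : 0 < e) (hce : IsCoprime c e)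
    (h : c * (c ^ 2 - 3 * c * e ^ 2 + 3 * (e ^ 2) ^ 2) = b ^ 2) (h3 : ¬ 3 ∣ c) :
    ∃ f w, c = f ^ 2 ∧ CoverPoint f e w := by
  have hc3 : IsCoprime c 3 := (Int.prime_three.coprime_iff_not_dvd.2 h3).symm
  have hquad : c ^ 2 - 3 * c * e ^ 2 + 3 * (e ^ 2) ^ 2
      = 3 * (e ^ 2) ^ 2 + c * (c - 3 * e ^ 2) := by ring
  have hcop : IsCoprime c (c ^ 2 - 3 * c * e ^ 2 + 3 * (e ^ 2) ^ 2) := by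
    rw [hquad]
    exact (hc3.mul_right hce.pow_right.pow_right).add_mul_left_right _
  have hpos := sq_sub_three_mul_add_three_mul_sq_pos c (pow_ne_zero 2 he.ne')
  obtain ⟨f, w, hf, hw, rfl, hw2⟩ :=
    exists_pos_eq_pow_and_eq_pow_of_mul_eq_pow two_ne_zero hc hpos hcop h
  exact ⟨f, w, rfl, hf, he, hw, (IsCoprime.pow_left_iff two_pos).1 hce, by linear_combination -hw2⟩

theorem exists_coverPoint_of_three_dvd (hc : 0 < c) (he : 0 < e) (hce : IsCoprime c e)
    (h : c * (c ^ 2 - 3 * c * e ^ 2 + 3 * (e ^ 2) ^ 2) = b ^ 2) (h3 : 3 ∣ c) :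
    ∃ f w, c = 3 * f ^ 2 ∧ CoverPoint e f w := by
  obtain ⟨b, rfl⟩ : 3 ∣ b := Int.prime_three.dvd_of_dvd_pow (h ▸ h3.mul_right _)
  obtain ⟨d, rfl⟩ := h3
  have hd : 0 < d := pos_of_mul_pos_right hc zero_le_three
  have hde : IsCoprime d e := hce.of_mul_left_right
  have hmul : d * ((e ^ 2) ^ 2 - 3 * e ^ 2 * d + 3 * d ^ 2) = b ^ 2 := by linarith
  have hquad : (e ^ 2) ^ 2 - 3 * e ^ 2 * d + 3 * d ^ 2
      = (e ^ 2) ^ 2 + d * (3 * d - 3 * e ^ 2) := by ring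
  have hcop : IsCoprime d ((e ^ 2) ^ 2 - 3 * e ^ 2 * d + 3 * d ^ 2) := by
    rw [hquad]
    exact hde.pow_right.pow_right.add_mul_left_right _
  have hpos := sq_sub_three_mul_add_three_mul_sq_pos (e ^ 2) hd.ne'
  obtain ⟨f, w, hf, hw, rfl, hw2⟩ :=
    exists_pos_eq_pow_and_eq_pow_of_mul_eq_pow two_ne_zero hd hpos hcop hmul
  exact ⟨f, w, rfl, he, hf, hw, ((IsCoprime.pow_left_iff two_pos).1 hde).symm,
    by linear_combination -hw2⟩

theorem eq_one_and_eq_one_or_three_of_mul_eq_sq (hc : 0 < c) (he : 0 < e) (hce : IsCoprime c e)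
    (h : c * (c ^ 2 - 3 * c * e ^ 2 + 3 * (e ^ 2) ^ 2) = b ^ 2) : e = 1 ∧ (c = 1 ∨ c = 3) := by
  by_cases h3 : 3 ∣ c
  · obtain ⟨f, w, rfl, hcover⟩ := exists_coverPoint_of_three_dvd hc he hce h h3
    obtain ⟨rfl, rfl⟩ := hcover.eq_one
    simp
  · obtain ⟨f, w, rfl, hcover⟩ := exists_coverPoint_of_not_three_dvd hc he hce h h3
    obtain ⟨rfl, rfl⟩ := hcover.eq_one
    simp

end Cubic

theorem eq_one_and_eq_of_sq_eq_cube_add_pow_six {a b e : ℤ} (he : 0 < e) (hae : IsCoprime a e)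
    (h : b ^ 2 = a ^ 3 + e ^ 6) : e = 1 ∧ (a = 0 ∨ a = 2 ∨ a = -1) := by
  have hle : -e ^ 2 ≤ a := by
    have hcube : (-e ^ 2) ^ 3 ≤ a ^ 3 := by linarith [sq_nonneg b]
    exact (Odd.strictMono_pow (by decide : Odd 3)).le_iff_le.1 hcube
  rcases hle.eq_or_lt with rfl | hlt
  · have hunit : IsUnit e :=
      isCoprime_self.1 ((IsCoprime.pow_left_iff two_pos).1 ((IsCoprime.neg_left_iff _ _).1 hae))
    obtain rfl : e = 1 := by rcases Int.isUnit_iff.1 hunit with h1 | h1 <;> omega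
    simp
  · have hcop : IsCoprime (a + e ^ 2) e := by
      rw [sq]
      exact hae.add_mul_left_left e
    have hmul : (a + e ^ 2) * ((a + e ^ 2) ^ 2 - 3 * (a + e ^ 2) * e ^ 2 + 3 * (e ^ 2) ^ 2)
        = b ^ 2 := by linear_combination -h
    obtain ⟨rfl, hc⟩ := eq_one_and_eq_one_or_three_of_mul_eq_sq (by linarith) he hcop hmul
    omega

theorem exists_int_of_sq_eq_cube_add {u v : ℚ} {k : ℤ} (h : v ^ 2 = u ^ 3 + k) :
    ∃ a b e : ℤ, 0 < e ∧ IsCoprime a e ∧ u = a / e ^ 2 ∧ b ^ 2 = a ^ 3 + k * e ^ 6 := by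
  have hden : u.den ^ 3 = v.den ^ 2 := by
    have := congrArg Rat.den h
    rwa [Rat.add_intCast_den, Rat.den_pow, Rat.den_pow, eq_comm] at this
  obtain ⟨e, hue, hve⟩ :=
    Nat.exists_eq_pow_of_exponent_coprime_of_pow_eq_pow (by norm_num) hden
  have he : 0 < e := Nat.pos_of_ne_zero (by rintro rfl; simp at hue)
  have hu : u = u.num / (e : ℚ) ^ 2 := by
    rw [← Nat.cast_pow, ← hue, Rat.num_div_den]
  have hv : v = v.num / (e : ℚ) ^ 3 := by
    rw [← Nat.cast_pow, ← hve, Rat.num_div_den]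
  refine ⟨u.num, v.num, e, mod_cast he, ?_, mod_cast hu, ?_⟩
  · have hcop := Rat.isCoprime_num_den u
    rw [hue, Nat.cast_pow] at hcop
    exact (IsCoprime.pow_right_iff two_pos).1 hcop
  · have hcleared : (v.num : ℚ) ^ 2 = u.num ^ 3 + k * e ^ 6 := by
      rw [hu, hv] at h
      field_simp at h
      rw [h, mul_comm (k : ℚ)]
    exact_mod_cast hcleared

theorem eq_zero_or_two_or_neg_one_of_sq_eq_cube_add_one {u v : ℚ} (h : v ^ 2 = u ^ 3 + 1) :
    u = 0 ∨ u = 2 ∨ u = -1 := by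
  obtain ⟨a, b, e, he, hae, rfl, heq⟩ := exists_int_of_sq_eq_cube_add (k := 1) (mod_cast h)
  obtain ⟨rfl, ha⟩ := eq_one_and_eq_of_sq_eq_cube_add_pow_six he hae (by rwa [one_mul] at heq)
  rcases ha with rfl | rfl | rfl <;> norm_num

/-- The affine rational points on the elliptic curve `v² = u³ + 1`
(Cremona label 36a1) are exactly `(0, ±1)`, `(2, ±3)` and `(−1, 0)`. -/
theorem stmt_14 (u v : ℚ) :
    v ^ 2 = u ^ 3 + 1 ↔
      (u = 0 ∧ v = 1) ∨ (u = 0 ∧ v = -1) ∨ (u = 2 ∧ v = 3) ∨ (u = 2 ∧ v = -3) ∨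
        (u = -1 ∧ v = 0) := by
  constructor
  · intro h
    rcases eq_zero_or_two_or_neg_one_of_sq_eq_cube_add_one h with rfl | rfl | rfl
    · have hv : v = 1 ∨ v = -1 := sq_eq_sq_iff_eq_or_eq_neg.1 (by linarith)
      tauto
    · have hv : v = 3 ∨ v = -3 := sq_eq_sq_iff_eq_or_eq_neg.1 (by linarith)
      tauto
    · have hv : v = 0 := sq_eq_zero_iff.1 (by linarith)
      tauto
  · rintro (⟨rfl, rfl⟩ | ⟨rfl, rfl⟩ | ⟨rfl, rfl⟩ | ⟨rfl, rfl⟩ | ⟨rfl, rfl⟩) <;> norm_num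
end

section
/- If t and x are rational numbers with t ≠ 0 such that X² − 2⁸·3⁵·((t − 1)(t + 1)(t² − t + 1)(t² + t + 1))³ vanishes at X = x, i.e., x² = 2⁸·3⁵·(t⁶ − 1)³, then t = 1 or t = −1. -/
/-!
Up to a square factor the equation reads `y² = (3t²)³ - 27`, so it suffices that the elliptic curve
`y² = x³ - 27` has no affine rational point besides `(3, 0)`. With `u = x - 3` the curve becomes
`y² = u (u² + 9u + 27)`, and 2-descent leads to the quartic `n² = m⁴ + 9m²e² + 27e⁴` with `m`, `e`
coprime. Completing the square turns this quartic into `P² = Q² + 108h⁴`, whose solutions with `P`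
positive and prime to `3h` are `P = a⁴ + 27b⁴`, `Q = ±(a⁴ - 27b⁴)`, `h = ab`; this gives a solution
of the quartic `k² = g⁴ - 18f²g² - 27f⁴` of the 2-isogenous curve. Completing the square there leads
to the same equation again, and back to the first quartic with a smaller `e`.
-/

theorem exists_eq_sq_of_isCoprime_of_mul_eq_sq {u v n : ℤ} (huv : IsCoprime u v) (hu : 0 < u)
    (h : u * v = n ^ 2) : ∃ a b : ℤ, u = a ^ 2 ∧ v = b ^ 2 := by
  have hv : 0 ≤ v := nonneg_of_mul_nonneg_right (h ▸ sq_nonneg n) hu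
  obtain ⟨a, ha | ha⟩ := Int.sq_of_isCoprime huv h
  · obtain ⟨b, hb | hb⟩ := Int.sq_of_isCoprime huv.symm ((mul_comm v u).trans h)
    · exact ⟨a, b, ha, hb⟩
    · exact ⟨a, 0, ha, by nlinarith [sq_nonneg b]⟩
  · nlinarith [sq_nonneg a]

theorem exists_eq_pow_of_not_dvd_of_mul_eq_prime_pow_mul_pow {p j k u v h : ℕ} (hp : p.Prime)
    (hk : k ≠ 0) (huv : u.Coprime v) (hpu : ¬ p ∣ u) (H : u * v = p ^ j * h ^ k) :
    ∃ a b, a * b = h ∧ u = a ^ k ∧ v = p ^ j * b ^ k := by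
  obtain ⟨w, rfl⟩ : p ^ j ∣ v :=
    (((hp.coprime_iff_not_dvd).2 hpu).pow_left j).dvd_of_dvd_mul_left (Dvd.intro _ H.symm)
  have huw : u * w = h ^ k :=
    Nat.eq_of_mul_eq_mul_left (pow_pos hp.pos j) (by rw [← H, mul_left_comm])
  have hcop : u.Coprime w := huv.coprime_mul_left_right
  obtain ⟨a, rfl⟩ := exists_eq_pow_of_mul_eq_pow (Nat.isUnit_iff.2 hcop) huw
  obtain ⟨b, rfl⟩ := exists_eq_pow_of_mul_eq_pow (Nat.isUnit_iff.2 hcop.symm)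
    ((mul_comm w _).trans huw)
  exact ⟨a, b, Nat.pow_left_injective hk ((mul_pow a b k).trans huw), rfl, rfl⟩

theorem exists_eq_pow_of_coprime_of_mul_eq_prime_pow_mul_pow {p j k u v h : ℕ} (hp : p.Prime)
    (hk : k ≠ 0) (huv : u.Coprime v) (H : u * v = p ^ j * h ^ k) :
    ∃ a b, a * b = h ∧ (u = a ^ k ∧ v = p ^ j * b ^ k ∨ u = p ^ j * b ^ k ∧ v = a ^ k) := by
  by_cases hpu : p ∣ u
  · have hpv : ¬ p ∣ v := fun hpv => Nat.not_coprime_of_dvd_of_dvd hp.one_lt hpu hpv huv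
    obtain ⟨a, b, hab, hv, hu⟩ := exists_eq_pow_of_not_dvd_of_mul_eq_prime_pow_mul_pow hp hk
      huv.symm hpv ((mul_comm v u).trans H)
    exact ⟨a, b, hab, .inr ⟨hu, hv⟩⟩
  · obtain ⟨a, b, hab, hu, hv⟩ :=
      exists_eq_pow_of_not_dvd_of_mul_eq_prime_pow_mul_pow hp hk huv hpu H
    exact ⟨a, b, hab, .inl ⟨hu, hv⟩⟩

theorem exists_add_eq_sub_eq_of_sq_eq_sq_add_four_mul {P Q c : ℤ} (H : P ^ 2 = Q ^ 2 + 4 * c) :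
    ∃ u v : ℤ, u + v = P ∧ v - u = Q ∧ u * v = c := by
  have hparity : Even (P - Q) := by
    have : Even (P ^ 2 - Q ^ 2) := ⟨2 * c, by linear_combination H⟩
    simpa [Int.even_sub, Int.even_pow] using this
  obtain ⟨u, hu⟩ := hparity
  obtain rfl : P = Q + 2 * u := by linear_combination hu
  exact ⟨u, u + Q, by ring, by ring, by linarith⟩

theorem exists_eq_pow_add_of_sq_eq_sq_add {p j k : ℕ} {P Q h : ℤ} (hp : p.Prime) (hk : k ≠ 0)
    (hkeven : Even k) (hP : 0 ≤ P) (hcop : IsCoprime P (p * h))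
    (H : P ^ 2 = Q ^ 2 + 4 * (p ^ j * h ^ k)) :
    ∃ a b : ℤ, a * b = h ∧ P = a ^ k + p ^ j * b ^ k ∧
      (Q = a ^ k - p ^ j * b ^ k ∨ Q = p ^ j * b ^ k - a ^ k) := by
  obtain ⟨u, v, rfl, rfl, huv⟩ := exists_add_eq_sub_eq_of_sq_eq_sq_add_four_mul H
  have huv_coprime : IsCoprime u v := by
    have hsum : IsCoprime (u + v) (u * v) :=
      huv ▸ hcop.of_mul_right_left.pow_right.mul_right hcop.of_mul_right_right.pow_right
    exact IsCoprime.of_add_mul_right_left (z := 1) (by simpa using hsum.of_mul_right_right)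
  have huv_nonneg : 0 ≤ u * v := huv ▸ mul_nonneg (by positivity) (hkeven.pow_nonneg h)
  have hu : 0 ≤ u := by nlinarith
  have hv : 0 ≤ v := by nlinarith
  lift u to ℕ using hu
  lift v to ℕ using hv
  have huv_nat : u * v = p ^ j * h.natAbs ^ k := by
    zify
    rw [huv, hkeven.pow_abs]
  obtain ⟨a, b, hab, hfactors⟩ := exists_eq_pow_of_coprime_of_mul_eq_prime_pow_mul_pow hp hk
    (Nat.isCoprime_iff_coprime.1 huv_coprime) huv_nat
  obtain ⟨s, hs, hsk⟩ : ∃ s : ℤ, s * b = h ∧ s ^ k = a ^ k := by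
    rcases Int.natAbs_eq h with hh | hh <;> rw [← hab] at hh
    · exact ⟨a, by rw [hh, Nat.cast_mul], rfl⟩
    · exact ⟨-a, by rw [hh, Nat.cast_mul, neg_mul], hkeven.neg_pow _⟩
  refine ⟨s, b, hs, ?_⟩
  rw [hsk]
  rcases hfactors with ⟨rfl, rfl⟩ | ⟨rfl, rfl⟩ <;> push_cast
  · exact ⟨rfl, .inr rfl⟩
  · exact ⟨add_comm _ _, .inl rfl⟩

theorem exists_eq_pow_four_add_of_sq_eq_sq_add {P Q h : ℤ} (hP : 0 ≤ P)
    (hcop : IsCoprime P (3 * h)) (H : P ^ 2 = Q ^ 2 + 108 * h ^ 4) :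
    ∃ a b : ℤ, a * b = h ∧ IsCoprime a (3 * b) ∧ P = a ^ 4 + 27 * b ^ 4 ∧
      (Q = a ^ 4 - 27 * b ^ 4 ∨ Q = 27 * b ^ 4 - a ^ 4) := by
  obtain ⟨a, b, rfl, rfl, hQ⟩ := exists_eq_pow_add_of_sq_eq_sq_add (j := 3) (k := 4)
    Nat.prime_three (by decide) (by decide) hP hcop (H.trans (by push_cast; ring))
  push_cast at hcop hQ ⊢
  have hab : IsCoprime (a ^ 4 + 27 * b ^ 4) (3 * b) :=
    hcop.of_isCoprime_of_dvd_right ⟨a, by ring⟩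
  rw [show a ^ 4 + 27 * b ^ 4 = a ^ 4 + 9 * b ^ 3 * (3 * b) by ring,
    IsCoprime.add_mul_right_left_iff, IsCoprime.pow_left_iff four_pos] at hab
  exact ⟨a, b, rfl, hab, rfl, hQ⟩

theorem three_dvd_of_three_dvd_sq_add_sq {x y : ℤ} (h : 3 ∣ x ^ 2 + y ^ 2) : 3 ∣ x := by
  rw [← Nat.cast_ofNat, ← ZMod.intCast_zmod_eq_zero_iff_dvd] at h ⊢
  push_cast at h
  generalize (x : ZMod 3) = x, (y : ZMod 3) = y at h ⊢
  decide +revert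

theorem isCoprime_three_mul_of_sq_eq_quartic {m e n : ℤ} (hme : IsCoprime m e)
    (H : n ^ 2 = m ^ 4 + 9 * m ^ 2 * e ^ 2 + 27 * e ^ 4) : IsCoprime m (3 * e) := by
  refine IsCoprime.mul_right ((Int.prime_three.coprime_iff_not_dvd.2 ?_).symm) hme
  rintro ⟨m, rfl⟩
  obtain ⟨n, rfl⟩ : 3 ∣ n := Int.prime_three.dvd_of_dvd_pow (n := 2)
    ⟨27 * m ^ 4 + 27 * m ^ 2 * e ^ 2 + 9 * e ^ 4, by linear_combination H⟩
  obtain ⟨n, rfl⟩ : 3 ∣ n := Int.prime_three.dvd_of_dvd_pow (n := 2)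
    ⟨3 * m ^ 4 + 3 * m ^ 2 * e ^ 2 + e ^ 4, by linarith⟩
  have three_dvd_e : (3 : ℤ) ∣ e := Int.prime_three.dvd_of_dvd_pow (n := 4)
    ⟨n ^ 2 - m ^ 4 - m ^ 2 * e ^ 2, by linarith⟩
  exact Int.prime_three.not_isUnit (hme.isUnit_of_dvd' (Dvd.intro m rfl) three_dvd_e)

/-- The hypothesis is `n² = m⁴ + 9m²e² + 27e⁴` at `e = 2h`. -/
theorem exists_isogenous_quartic_of_sq_eq_sq_add {m h n : ℤ} (hcop : IsCoprime m (3 * h))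
    (H : n ^ 2 = (m ^ 2 + 18 * h ^ 2) ^ 2 + 108 * h ^ 4) :
    ∃ f g : ℤ, g * f = h ∧ IsCoprime g (3 * f) ∧
      m ^ 2 = g ^ 4 - 18 * f ^ 2 * g ^ 2 - 27 * f ^ 4 := by
  have hn : IsCoprime |n| (3 * h) := by
    have : IsCoprime (m ^ 4 + (12 * m ^ 2 * h + 144 * h ^ 3) * (3 * h)) (3 * h) :=
      IsCoprime.add_mul_right_left_iff.2 hcop.pow_left
    rw [show m ^ 4 + (12 * m ^ 2 * h + 144 * h ^ 3) * (3 * h) = n ^ 2 by rw [H]; ring] at this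
    exact ((IsCoprime.pow_left_iff two_pos).1 this).abs_left
  obtain ⟨g, f, rfl, hg, -, hQ | hQ⟩ := exists_eq_pow_four_add_of_sq_eq_sq_add
    (Q := m ^ 2 + 18 * h ^ 2) (abs_nonneg n) hn (by rw [sq_abs, H])
  · exact ⟨f, g, rfl, hg, by linear_combination hQ⟩
  · have three_dvd_m : (3 : ℤ) ∣ m := three_dvd_of_three_dvd_sq_add_sq (y := g ^ 2)
      ⟨9 * f ^ 4 - 6 * (g * f) ^ 2, by linear_combination hQ⟩
    exact absurd (hcop.isUnit_of_dvd' three_dvd_m (Dvd.intro _ rfl)) Int.prime_three.not_isUnit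

theorem exists_isogenous_quartic {m e n : ℤ} (hme : IsCoprime m e)
    (H : n ^ 2 = m ^ 4 + 9 * m ^ 2 * e ^ 2 + 27 * e ^ 4) :
    ∃ f g k : ℤ, g * f ∣ e ∧ IsCoprime g (3 * f) ∧
      k ^ 2 = g ^ 4 - 18 * f ^ 2 * g ^ 2 - 27 * f ^ 4 := by
  have hcop : IsCoprime m (3 * e) := isCoprime_three_mul_of_sq_eq_quartic hme H
  rcases Int.even_or_odd' e with ⟨h, rfl | he⟩
  · obtain ⟨f, g, rfl, hg, hk⟩ := exists_isogenous_quartic_of_sq_eq_sq_add (h := h) (n := n)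
      (hcop.of_isCoprime_of_dvd_right ⟨2, by ring⟩) (by linear_combination H)
    exact ⟨f, g, m, Dvd.intro_left 2 rfl, hg, hk⟩
  · -- For odd `e` pass to the proportional solution `(2m, 2e, 4n)`.
    have htwo : IsCoprime 2 (3 * e) := ⟨-3 * h - 1, 1, by rw [he]; ring⟩
    obtain ⟨f, g, rfl, hg, hk⟩ := exists_isogenous_quartic_of_sq_eq_sq_add (n := 4 * n)
      (htwo.mul_left hcop) (by linear_combination 16 * H)
    exact ⟨f, g, 2 * m, dvd_rfl, hg, hk⟩

theorem nine_mul_sq_le_sq_of_sq_eq_isogenous_quartic {f g k : ℤ}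
    (H : k ^ 2 = g ^ 4 - 18 * f ^ 2 * g ^ 2 - 27 * f ^ 4) : 9 * f ^ 2 ≤ g ^ 2 := by
  by_contra! hlt
  have hf : 0 < f ^ 2 := by linarith [sq_nonneg g]
  nlinarith [sq_nonneg k, mul_nonneg (sq_nonneg g) (sub_nonneg.2 hlt.le)]

theorem exists_quartic_of_isogenous_quartic {f g k : ℤ} (hg : IsCoprime g (3 * f))
    (H : k ^ 2 = g ^ 4 - 18 * f ^ 2 * g ^ 2 - 27 * f ^ 4) :
    ∃ a b : ℤ, a * b = f ∧ IsCoprime a b ∧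
      g ^ 2 = a ^ 4 + 9 * a ^ 2 * b ^ 2 + 27 * b ^ 4 := by
  have hcop : IsCoprime (g ^ 2 - 9 * f ^ 2) (3 * f) := by
    rw [show g ^ 2 - 9 * f ^ 2 = g ^ 2 - 3 * f * (3 * f) by ring]
    exact IsCoprime.sub_mul_right_left_iff.2 hg.pow_left
  obtain ⟨a, b, rfl, hab, hP, -⟩ := exists_eq_pow_four_add_of_sq_eq_sq_add (Q := k)
    (sub_nonneg.2 (nine_mul_sq_le_sq_of_sq_eq_isogenous_quartic H)) hcop
    (by linear_combination -H)
  exact ⟨a, b, rfl, hab.of_mul_right_right, by linear_combination hP⟩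

theorem exists_natAbs_lt_of_quartic {m e n : ℤ} (he : e ≠ 0) (hme : IsCoprime m e)
    (H : n ^ 2 = m ^ 4 + 9 * m ^ 2 * e ^ 2 + 27 * e ^ 4) :
    ∃ a b g : ℤ, b ≠ 0 ∧ b.natAbs < e.natAbs ∧ IsCoprime a b ∧
      g ^ 2 = a ^ 4 + 9 * a ^ 2 * b ^ 2 + 27 * b ^ 4 := by
  obtain ⟨f, g, k, hgf, hg, hk⟩ := exists_isogenous_quartic hme H
  obtain ⟨a, b, rfl, hab, hquartic⟩ := exists_quartic_of_isogenous_quartic hg hk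
  have hb : b ≠ 0 := by
    rintro rfl
    exact he (zero_dvd_iff.1 (by simpa using hgf))
  have hg_gt : 1 < g.natAbs := by
    have : 0 < b ^ 4 := by positivity
    have : 1 < g ^ 2 := by nlinarith [sq_nonneg (a ^ 2), sq_nonneg (a * b)]
    zify
    exact (one_lt_sq_iff_one_lt_abs g).1 this
  have hgb_le : g.natAbs * b.natAbs ≤ e.natAbs := by
    rw [← Int.natAbs_mul]
    exact Int.natAbs_le_of_dvd_ne_zero (dvd_trans ⟨a, by ring⟩ hgf) he
  have hb_pos : 0 < b.natAbs := Int.natAbs_pos.2 hb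
  exact ⟨a, b, g, hb, by nlinarith, hab, hquartic⟩

theorem eq_zero_of_sq_eq_quartic {m e n : ℤ} (hme : IsCoprime m e)
    (H : n ^ 2 = m ^ 4 + 9 * m ^ 2 * e ^ 2 + 27 * e ^ 4) : e = 0 := by
  induction hN : e.natAbs using Nat.strong_induction_on generalizing m e n with
  | _ N ih =>
    subst hN
    by_contra he
    obtain ⟨a, b, g, hb, hlt, hab, hquartic⟩ := exists_natAbs_lt_of_quartic he hme H
    exact hb (ih _ hlt hab hquartic rfl)

theorem exists_sq_eq_quartic_of_mul_eq_sq {A B C u e n : ℤ} (hu : 0 < u)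
    (hcop : IsCoprime u (C * e)) (H : u * (A * u ^ 2 + B * u * e ^ 2 + C * e ^ 4) = n ^ 2) :
    ∃ a b : ℤ, u = a ^ 2 ∧ b ^ 2 = A * a ^ 4 + B * a ^ 2 * e ^ 2 + C * e ^ 4 := by
  have hfactors : IsCoprime u (A * u ^ 2 + B * u * e ^ 2 + C * e ^ 4) := by
    rw [show A * u ^ 2 + B * u * e ^ 2 + C * e ^ 4 = C * e ^ 4 + (A * u + B * e ^ 2) * u by ring]
    exact IsCoprime.add_mul_right_right_iff.2
      (hcop.of_mul_right_left.mul_right hcop.of_mul_right_right.pow_right)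
  obtain ⟨a, b, rfl, hb⟩ := exists_eq_sq_of_isCoprime_of_mul_eq_sq hfactors hu H
  exact ⟨a, b, rfl, by linear_combination -hb⟩

theorem twenty_seven_dvd_of_mul_eq_sq {u e n : ℤ} (hue : IsCoprime u e) (hu : 3 ∣ u)
    (H : u * (u ^ 2 + 9 * u * e ^ 2 + 27 * e ^ 4) = n ^ 2) : 27 ∣ u := by
  -- If `u` had 3-adic valuation 1 or 2, then `n ^ 2` would have valuation 3 or 5.
  have he : ¬ (3 : ℤ) ∣ e := fun he => Int.prime_three.not_isUnit (hue.isUnit_of_dvd' hu he)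
  obtain ⟨r, rfl⟩ := hu
  obtain ⟨n, rfl⟩ : 3 ∣ n := Int.prime_three.dvd_of_dvd_pow (n := 2)
    ⟨9 * (r * (r ^ 2 + 3 * r * e ^ 2 + 3 * e ^ 4)), by linear_combination -H⟩
  obtain ⟨n, rfl⟩ : 3 ∣ n := Int.prime_three.dvd_of_dvd_pow (n := 2)
    ⟨r * (r ^ 2 + 3 * r * e ^ 2 + 3 * e ^ 4), by linarith⟩
  obtain ⟨s, rfl⟩ : 3 ∣ r := Int.prime_three.dvd_of_dvd_pow (n := 3)
    ⟨n ^ 2 - r ^ 2 * e ^ 2 - r * e ^ 4, by linarith⟩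
  obtain ⟨n, rfl⟩ : 3 ∣ n := Int.prime_three.dvd_of_dvd_pow (n := 2)
    ⟨s * (3 * s ^ 2 + 3 * s * e ^ 2 + e ^ 4), by linarith⟩
  have three_dvd_mul : 3 ∣ s * e ^ 4 := ⟨n ^ 2 - s ^ 3 - s ^ 2 * e ^ 2, by linarith⟩
  obtain ⟨w, rfl⟩ : 3 ∣ s := (Int.prime_three.dvd_mul.1 three_dvd_mul).resolve_right
    fun h => he (Int.prime_three.dvd_of_dvd_pow h)
  exact ⟨w, by ring⟩

theorem eq_zero_of_mul_eq_sq {u e n : ℤ} (he : e ≠ 0) (hue : IsCoprime u e)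
    (H : u * (u ^ 2 + 9 * u * e ^ 2 + 27 * e ^ 4) = n ^ 2) : u = 0 := by
  have hv : 0 < u ^ 2 + 9 * u * e ^ 2 + 27 * e ^ 4 := by
    have : 0 < e ^ 4 := by positivity
    nlinarith [sq_nonneg (2 * u + 9 * e ^ 2)]
  by_contra hu0
  have hu_pos : 0 < u :=
    (nonneg_of_mul_nonneg_left (H ▸ sq_nonneg n) hv).lt_of_ne' hu0
  by_cases hu3 : 3 ∣ u
  · obtain ⟨w, rfl⟩ := twenty_seven_dvd_of_mul_eq_sq hue hu3 H
    obtain ⟨n, rfl⟩ : 27 ∣ n := (Int.pow_dvd_pow_iff two_ne_zero).1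
      ⟨w * (27 * w ^ 2 + 9 * w * e ^ 2 + e ^ 4), by linear_combination -H⟩
    have hwe : IsCoprime w e := hue.of_mul_left_right
    obtain ⟨a, b, rfl, hb⟩ := exists_sq_eq_quartic_of_mul_eq_sq (A := 27) (B := 9) (C := 1)
      (u := w) (e := e) (n := n) (by linarith) (by rwa [one_mul]) (by linarith)
    have ha : a = 0 := eq_zero_of_sq_eq_quartic (m := e) (n := b)
      ((IsCoprime.pow_left_iff two_pos).1 hwe).symm (by linear_combination hb)
    exact hu0 (by rw [ha]; norm_num)
  · have hu27 : IsCoprime u 27 := by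
      simpa using ((Int.prime_three.coprime_iff_not_dvd.2 hu3).symm.pow_right (n := 3))
    obtain ⟨a, b, rfl, hb⟩ := exists_sq_eq_quartic_of_mul_eq_sq (A := 1) (B := 9) (C := 27)
      hu_pos (hu27.mul_right hue) (by rw [one_mul]; exact H)
    exact he (eq_zero_of_sq_eq_quartic (n := b) ((IsCoprime.pow_left_iff two_pos).1 hue)
      (by linear_combination hb))

theorem exists_den_eq_sq_of_sq_eq_cubic {A B C : ℤ} {x y : ℚ}
    (H : y ^ 2 = x ^ 3 + A * x ^ 2 + B * x + C) :
    ∃ e n : ℤ, (x.den : ℤ) = e ^ 2 ∧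
      x.num ^ 3 + A * x.num ^ 2 * e ^ 2 + B * x.num * e ^ 4 + C * e ^ 6 = n ^ 2 := by
  have hsquare : IsSquare ((x.den * (x.num ^ 3 + A * x.num ^ 2 * x.den + B * x.num * x.den ^ 2 +
      C * x.den ^ 3) : ℤ) : ℚ) := by
    refine ⟨y * x.den ^ 2, ?_⟩
    push_cast
    rw [← Rat.mul_den_eq_num x]
    linear_combination -(x.den : ℚ) ^ 4 * H
  obtain ⟨w, hw⟩ := Rat.isSquare_intCast_iff.1 hsquare
  have hcop : IsCoprime (x.den : ℤ) (x.num ^ 3 + A * x.num ^ 2 * x.den + B * x.num * x.den ^ 2 +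
      C * x.den ^ 3) := by
    rw [show x.num ^ 3 + A * x.num ^ 2 * x.den + B * x.num * x.den ^ 2 + C * x.den ^ 3 =
      x.num ^ 3 + (A * x.num ^ 2 + B * x.num * x.den + C * x.den ^ 2) * x.den by ring]
    exact IsCoprime.add_mul_right_right_iff.2 x.isCoprime_num_den.symm.pow_right
  obtain ⟨e, n, he, hn⟩ := exists_eq_sq_of_isCoprime_of_mul_eq_sq hcop
    (Int.natCast_pos.2 x.den_pos) (hw.trans (sq w).symm)
  refine ⟨e, n, he, ?_⟩
  rw [he] at hn
  linear_combination hn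

theorem eq_three_of_sq_eq_cube_sub_twenty_seven {x y : ℚ} (H : y ^ 2 = x ^ 3 - 27) : x = 3 := by
  obtain ⟨u, rfl⟩ : ∃ u, x = u + 3 := ⟨x - 3, by ring⟩
  obtain ⟨e, n, hden, hnum⟩ := exists_den_eq_sq_of_sq_eq_cubic (A := 9) (B := 27) (C := 0)
    (x := u) (y := y) (by push_cast; linear_combination H)
  have he : e ≠ 0 := by
    rintro rfl
    exact u.den_nz (by exact_mod_cast hden)
  have hcop : IsCoprime u.num e :=
    (IsCoprime.pow_right_iff two_pos).1 (hden ▸ u.isCoprime_num_den)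
  have hu : u = 0 :=
    Rat.num_eq_zero.1 (eq_zero_of_mul_eq_sq (n := n) he hcop (by linear_combination hnum))
  rw [hu, zero_add]

/-- If `t, x` are rational with `t ≠ 0` and
`x² = 2⁸·3⁵·((t − 1)(t + 1)(t² − t + 1)(t² + t + 1))³`, then `t = 1` or `t = −1`. -/
theorem stmt_17 (t x : ℚ) (ht : t ≠ 0)
    (h : x ^ 2 = 2 ^ 8 * 3 ^ 5 * ((t - 1) * (t + 1) * (t ^ 2 - t + 1) * (t ^ 2 + t + 1)) ^ 3) :
    t = 1 ∨ t = -1 := by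
  rw [show (t - 1) * (t + 1) * (t ^ 2 - t + 1) * (t ^ 2 + t + 1) = t ^ 6 - 1 by ring] at h
  suffices t ^ 2 = 1 from sq_eq_one_iff.1 this
  have hcurve : (x / (48 * (t ^ 6 - 1))) ^ 2 = (3 * t ^ 2) ^ 3 - 27 := by
    rw [div_pow, h]
    by_cases hs : t ^ 6 - 1 = 0
    · rw [hs]
      linear_combination -27 * hs
    · field_simp
      ring
  linarith [eq_three_of_sq_eq_cube_sub_twenty_seven hcurve]
end
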